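/- arXiv:2503.00298 — 2 statements merged into one kernel-verified Lean document; each statement's English description precedes it below -/
import Mathlib

section
/- Fix ℓ ≥ 1 and dimensions n₀, n₁, …, n_ℓ. For each l ∈ {1, …, ℓ} let W_l and Ŵ_l be n_l × n_{l−1} real matrices with ‖Ŵ_l‖_F ≤ ‖W_l‖_F. Let σ denote the coordinatewise ReLU map on each ℝ^{n_l}, and define the networks f(x) = W_ℓ σ(W_{ℓ−1} σ(⋯ W_2 σ(W_1 x))) and f̂(x) = Ŵ_ℓ σ(Ŵ_{ℓ−1} σ(⋯ Ŵ_2 σ(Ŵ_1 x))). Then for every x ∈ ℝ^{n₀} with ‖x‖ ≤ 1, ‖f(x) − f̂(x)‖ ≤ Σ_{l=1}^{ℓ} ( ‖W_l − Ŵ_l‖_F · Π_{l′=1, l′≠l}^{ℓ} ‖W_{l′}‖_F ). -/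
/-- The Frobenius norm of a real matrix. -/
noncomputable def frobNorm {m n : ℕ} (A : Matrix (Fin m) (Fin n) ℝ) : ℝ :=
  Real.sqrt (∑ i, ∑ j, (A i j) ^ 2)

/-- `net dims W k x` is the `(k+1)`-layer ReLU network
`W_{k+1} σ(W_k σ(⋯ W_2 σ(W_1 x)))` (with coordinatewise ReLU `σ` between layers and no
activation after the last layer), with weight matrices `W l : dims (l+1) × dims l`. -/
noncomputable def net (dims : ℕ → ℕ)
    (W : ∀ l : ℕ, Matrix (Fin (dims (l + 1))) (Fin (dims l)) ℝ) :
    (k : ℕ) → (Fin (dims 0) → ℝ) → (Fin (dims (k + 1)) → ℝ)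
  | 0 => fun x => (W 0).mulVec x
  | (k + 1) => fun x => (W (k + 1)).mulVec (fun i => max (net dims W k x i) 0)

/-!
Since ReLU is 1-Lipschitz and fixes `0`, the outputs `y l` and `ŷ l` of the first `l` layers
satisfy, in Frobenius norms of the weights,
* `‖y (l + 1)‖ ≤ ‖W l‖ * ‖y l‖`,
* `‖y (l + 1) - ŷ (l + 1)‖ ≤ ‖Ŵ l‖ * ‖y l - ŷ l‖ + ‖W l - Ŵ l‖ * ‖y l‖`.

The discrete Grönwall inequality unrolls both recurrences. An error made at layer `l` is fed by the
unpruned layers before `l` and amplified by the pruned layers after `l`; replacing the norms of the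
latter by those of the unpruned layers gives the symmetric bound.
-/

open Finset WithLp
open scoped Matrix

section ProductsOmittingAnIndex

lemma prod_range_mul_prod_Ico_eq_prod_erase {M : Type*} [CommMonoid M] (f : ℕ → M) {l n : ℕ}
    (hl : l < n) :
    (∏ i ∈ range l, f i) * ∏ i ∈ Ico (l + 1) n, f i = ∏ i ∈ (range n).erase l, f i := by
  have hdisj : Disjoint (range l) (Ico (l + 1) n) :=
    disjoint_left.2 fun i hi hi' ↦ by simp only [mem_range, mem_Ico] at hi hi'; omega
  rw [← prod_union hdisj]
  congr 1
  ext i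
  simp only [mem_union, mem_range, mem_Ico, mem_erase]
  omega

lemma sum_mul_prod_range_mul_prod_Ico_le {R : Type*} [CommSemiring R] [PartialOrder R]
    [IsOrderedRing R] {a b d : ℕ → R} {n : ℕ} (hd : ∀ l ∈ range n, 0 ≤ d l)
    (hb : ∀ l ∈ range n, 0 ≤ b l) (hba : ∀ l ∈ range n, b l ≤ a l) :
    ∑ l ∈ range n, d l * ((∏ i ∈ range l, a i) * ∏ i ∈ Ico (l + 1) n, b i)
      ≤ ∑ l ∈ range n, d l * ∏ i ∈ (range n).erase l, a i := by
  refine sum_le_sum fun l hl ↦ mul_le_mul_of_nonneg_left ?_ (hd l hl)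
  have hln : l < n := mem_range.1 hl
  have hIco {i : ℕ} (hi : i ∈ Ico (l + 1) n) : i ∈ range n := mem_range.2 (mem_Ico.1 hi).2
  have ha : 0 ≤ ∏ i ∈ range l, a i := prod_nonneg fun i hi ↦
    have hin : i ∈ range n := mem_range.2 ((mem_range.1 hi).trans hln)
    (hb i hin).trans (hba i hin)
  rw [← prod_range_mul_prod_Ico_eq_prod_erase a hln]
  exact mul_le_mul_of_nonneg_left
    (prod_le_prod (fun i hi ↦ hb i (hIco hi)) fun i hi ↦ hba i (hIco hi)) ha

end ProductsOmittingAnIndex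

section Frobenius

open scoped Matrix.Norms.Frobenius

lemma frobNorm_eq_norm {m n : ℕ} (A : Matrix (Fin m) (Fin n) ℝ) : frobNorm A = ‖A‖ := by
  simp [frobNorm, Matrix.frobenius_norm_def, Real.sqrt_eq_rpow]

lemma frobNorm_nonneg {m n : ℕ} (A : Matrix (Fin m) (Fin n) ℝ) : 0 ≤ frobNorm A :=
  Real.sqrt_nonneg _

lemma prod_frobNorm_nonneg {ι : Type*} {m n : ι → ℕ} (s : Finset ι)
    (A : ∀ i, Matrix (Fin (m i)) (Fin (n i)) ℝ) : 0 ≤ ∏ i ∈ s, frobNorm (A i) :=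
  prod_nonneg fun i _ ↦ frobNorm_nonneg (A i)

variable {𝕜 m n : Type*} [RCLike 𝕜] [Fintype m] [Fintype n]

lemma norm_toLp_mulVec_le_frobenius (A : Matrix m n 𝕜) (v : EuclideanSpace 𝕜 n) :
    ‖toLp 2 (A *ᵥ v)‖ ≤ ‖A‖ * ‖v‖ := by
  simpa only [← Matrix.replicateCol_mulVec, Matrix.frobenius_norm_replicateCol, toLp_ofLp] using
    Matrix.frobenius_norm_mul A (Matrix.replicateCol Unit v)

lemma norm_toLp_mulVec_sub_toLp_mulVec_le_frobenius (A B : Matrix m n 𝕜)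
    (u v : EuclideanSpace 𝕜 n) :
    ‖toLp 2 (A *ᵥ u) - toLp 2 (B *ᵥ v)‖ ≤ ‖B‖ * ‖u - v‖ + ‖A - B‖ * ‖u‖ := by
  have hsplit : toLp 2 (A *ᵥ u) - toLp 2 (B *ᵥ v)
      = toLp 2 (B *ᵥ (u - v)) + toLp 2 ((A - B) *ᵥ u) := by
    simp only [Matrix.mulVec_sub, Matrix.sub_mulVec, toLp_sub]
    abel
  rw [hsplit]
  exact norm_add_le_of_le (norm_toLp_mulVec_le_frobenius B (u - v))
    (norm_toLp_mulVec_le_frobenius (A - B) u)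

end Frobenius

section CoordinatewiseMaps

variable {ι : Type*}

lemma lipschitzWith_toLp_map [Fintype ι] (p : ENNReal) [Fact (1 ≤ p)] {α β : ι → Type*}
    [∀ i, PseudoEMetricSpace (α i)] [∀ i, PseudoEMetricSpace (β i)] {K : NNReal}
    {f : ∀ i, α i → β i} (hf : ∀ i, LipschitzWith K (f i)) :
    LipschitzWith K fun v : PiLp p α ↦ (toLp p fun i ↦ f i (v i) : PiLp p β) := by
  intro u v
  rcases p.dichotomy with rfl | hp
  · simp only [PiLp.edist_eq_iSup, ENNReal.mul_iSup]
    exact iSup_mono fun i ↦ hf i (u i) (v i)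
  · have hp_pos : 0 < p.toReal := zero_lt_one.trans_le hp
    calc edist (toLp p fun i ↦ f i (u i) : PiLp p β) (toLp p fun i ↦ f i (v i))
      _ = (∑ i, edist (f i (u i)) (f i (v i)) ^ p.toReal) ^ (1 / p.toReal) :=
          PiLp.edist_eq_sum hp_pos _ _
      _ ≤ (∑ i, (K * edist (u i) (v i)) ^ p.toReal) ^ (1 / p.toReal) := by
          gcongr with i
          exact hf i (u i) (v i)
      _ = (K ^ p.toReal * ∑ i, edist (u i) (v i) ^ p.toReal) ^ (1 / p.toReal) := by
          simp only [ENNReal.mul_rpow_of_nonneg _ _ hp_pos.le, mul_sum]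
      _ = K * edist u v := by
          rw [ENNReal.mul_rpow_of_nonneg _ _ (by positivity), one_div,
            ENNReal.rpow_rpow_inv hp_pos.ne', PiLp.edist_eq_sum hp_pos, one_div]

/-- The coordinatewise ReLU activation `σ` on Euclidean space, written with `max · 0` so that it
unfolds to the activation inside `net`. -/
noncomputable def relu (v : EuclideanSpace ℝ ι) : EuclideanSpace ℝ ι :=
  toLp 2 fun i ↦ max (v i) 0

lemma relu_zero : relu (0 : EuclideanSpace ℝ ι) = 0 := by
  ext i
  simp [relu]

variable [Fintype ι]

lemma lipschitzWith_relu : LipschitzWith 1 (relu : EuclideanSpace ℝ ι → EuclideanSpace ℝ ι) :=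
  lipschitzWith_toLp_map 2 (f := fun (_ : ι) (t : ℝ) ↦ max t 0)
    fun _ ↦ LipschitzWith.id.max_const 0

lemma norm_relu_sub_relu_le (u v : EuclideanSpace ℝ ι) : ‖relu u - relu v‖ ≤ ‖u - v‖ := by
  simpa using lipschitzWith_relu.norm_sub_le u v

lemma norm_relu_le (v : EuclideanSpace ℝ ι) : ‖relu v‖ ≤ ‖v‖ := by
  simpa only [relu_zero, sub_zero] using norm_relu_sub_relu_le v 0

end CoordinatewiseMaps

section LayerOutputs

open scoped Matrix.Norms.Frobenius

variable {dims : ℕ → ℕ} (W What : ∀ l : ℕ, Matrix (Fin (dims (l + 1))) (Fin (dims l)) ℝ)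
  (x : EuclideanSpace ℝ (Fin (dims 0)))

/-- The output of the first `l` layers of the network on input `x`, before the activation that
follows them. Since `net dims W l` has `l + 1` layers, the index is shifted by one, which makes
room for the input itself at stage `0`. -/
noncomputable def layerOutput : ∀ l : ℕ, EuclideanSpace ℝ (Fin (dims l))
  | 0 => x
  | l + 1 => toLp 2 (net dims W l x)

lemma norm_layerOutput_succ_le (l : ℕ) :
    ‖layerOutput W x (l + 1)‖ ≤ frobNorm (W l) * ‖layerOutput W x l‖ := by
  rw [frobNorm_eq_norm]
  cases l with
  | zero => exact norm_toLp_mulVec_le_frobenius (W 0) x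
  | succ l =>
    calc ‖layerOutput W x (l + 2)‖
      _ ≤ ‖W (l + 1)‖ * ‖relu (layerOutput W x (l + 1))‖ :=
          norm_toLp_mulVec_le_frobenius (W (l + 1)) (relu (layerOutput W x (l + 1)))
      _ ≤ ‖W (l + 1)‖ * ‖layerOutput W x (l + 1)‖ := by
          gcongr
          exact norm_relu_le (layerOutput W x (l + 1))

lemma norm_layerOutput_succ_sub_le (l : ℕ) :
    ‖layerOutput W x (l + 1) - layerOutput What x (l + 1)‖
      ≤ frobNorm (What l) * ‖layerOutput W x l - layerOutput What x l‖
        + frobNorm (W l - What l) * ‖layerOutput W x l‖ := by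
  rw [frobNorm_eq_norm, frobNorm_eq_norm]
  cases l with
  | zero => exact norm_toLp_mulVec_sub_toLp_mulVec_le_frobenius (W 0) (What 0) x x
  | succ l =>
    set y := layerOutput W x (l + 1)
    set z := layerOutput What x (l + 1)
    calc ‖layerOutput W x (l + 2) - layerOutput What x (l + 2)‖
      _ ≤ ‖What (l + 1)‖ * ‖relu y - relu z‖ + ‖W (l + 1) - What (l + 1)‖ * ‖relu y‖ :=
          norm_toLp_mulVec_sub_toLp_mulVec_le_frobenius _ _ (relu y) (relu z)
      _ ≤ ‖What (l + 1)‖ * ‖y - z‖ + ‖W (l + 1) - What (l + 1)‖ * ‖y‖ := by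
          gcongr
          · exact norm_relu_sub_relu_le y z
          · exact norm_relu_le y

lemma norm_layerOutput_le (l : ℕ) :
    ‖layerOutput W x l‖ ≤ (∏ i ∈ range l, frobNorm (W i)) * ‖x‖ := by
  have hgrowth := discrete_gronwall_prod_general (n₀ := 0) (u := fun l ↦ ‖layerOutput W x l‖)
    (b := 0) (c := fun l ↦ frobNorm (W l))
    (fun l _ ↦ by simpa using norm_layerOutput_succ_le W x l)
    (fun l _ ↦ frobNorm_nonneg (W l)) l.zero_le
  simpa [layerOutput, mul_comm] using hgrowth

lemma norm_layerOutput_sub_le_sum (n : ℕ) :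
    ‖layerOutput W x n - layerOutput What x n‖
      ≤ ∑ l ∈ range n, frobNorm (W l - What l) * ‖layerOutput W x l‖
          * ∏ i ∈ Ico (l + 1) n, frobNorm (What i) := by
  have hgrowth := discrete_gronwall_prod_general (n₀ := 0)
    (u := fun l ↦ ‖layerOutput W x l - layerOutput What x l‖)
    (fun l _ ↦ norm_layerOutput_succ_sub_le W What x l)
    (fun l _ ↦ frobNorm_nonneg (What l)) n.zero_le
  simpa [layerOutput] using hgrowth

end LayerOutputs

theorem stmt_4_general (k : ℕ) (dims : ℕ → ℕ)
    (W What : ∀ l : ℕ, Matrix (Fin (dims (l + 1))) (Fin (dims l)) ℝ)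
    (x : EuclideanSpace ℝ (Fin (dims 0))) :
    ‖toLp 2 (net dims W k x) - toLp 2 (net dims What k x)‖
      ≤ (∑ l ∈ range (k + 1), frobNorm (W l - What l)
          * ((∏ i ∈ range l, frobNorm (W i)) * ∏ i ∈ Ico (l + 1) (k + 1), frobNorm (What i)))
        * ‖x‖ := by
  calc ‖toLp 2 (net dims W k x) - toLp 2 (net dims What k x)‖
    _ ≤ ∑ l ∈ range (k + 1), frobNorm (W l - What l) * ‖layerOutput W x l‖
          * ∏ i ∈ Ico (l + 1) (k + 1), frobNorm (What i) :=
        norm_layerOutput_sub_le_sum W What x (k + 1)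
    _ ≤ ∑ l ∈ range (k + 1), frobNorm (W l - What l) * ((∏ i ∈ range l, frobNorm (W i)) * ‖x‖)
          * ∏ i ∈ Ico (l + 1) (k + 1), frobNorm (What i) := by
        gcongr with l
        · exact prod_frobNorm_nonneg _ What
        · exact frobNorm_nonneg _
        · exact norm_layerOutput_le W x l
    _ = _ := by
        rw [sum_mul]
        exact sum_congr rfl fun l _ ↦ by ring

/-- Lemma 2 (network perturbation bound): if each pruned weight matrix satisfies
`‖Ŵ_l‖_F ≤ ‖W_l‖_F`, then for every input with `‖x‖ ≤ 1`,
`‖f(x) − f̂(x)‖ ≤ Σ_l ‖W_l − Ŵ_l‖_F Π_{l′ ≠ l} ‖W_{l′}‖_F`, where `f, f̂` are the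
`(k+1)`-layer ReLU networks (`ℓ = k + 1 ≥ 1` layers) with weights `W_l`, `Ŵ_l`. -/
theorem stmt_4 (k : ℕ) (dims : ℕ → ℕ)
    (W What : ∀ l : ℕ, Matrix (Fin (dims (l + 1))) (Fin (dims l)) ℝ)
    (hprune : ∀ l ∈ Finset.range (k + 1), frobNorm (What l) ≤ frobNorm (W l))
    (x : EuclideanSpace ℝ (Fin (dims 0))) (hx : ‖x‖ ≤ 1) :
    ‖(WithLp.equiv 2 (Fin (dims (k + 1)) → ℝ)).symm
          (net dims W k ((WithLp.equiv 2 (Fin (dims 0) → ℝ)) x))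
        - (WithLp.equiv 2 (Fin (dims (k + 1)) → ℝ)).symm
          (net dims What k ((WithLp.equiv 2 (Fin (dims 0) → ℝ)) x))‖
      ≤ ∑ l ∈ Finset.range (k + 1),
          frobNorm (W l - What l)
            * ∏ l' ∈ (Finset.range (k + 1)).erase l, frobNorm (W l') := by
  refine (stmt_4_general k dims W What x).trans ((mul_le_of_le_one_right ?_ hx).trans ?_)
  · exact sum_nonneg fun l _ ↦ mul_nonneg (frobNorm_nonneg (W l - What l))
      (mul_nonneg (prod_frobNorm_nonneg _ W) (prod_frobNorm_nonneg _ What))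
  · exact sum_mul_prod_range_mul_prod_Ico_le (fun l _ ↦ frobNorm_nonneg (W l - What l))
      (fun l _ ↦ frobNorm_nonneg (What l)) hprune
end

section
/- Define u : (0, 1) → ℝ by u(ρ) = 2 − ρ − ρ(log ρ − 1)² (natural logarithm). Let r : ℝ → ℝ be differentiable with derivative r′ nonnegative and monotone nondecreasing, and let T ≥ 0 and c ≥ 0 be constants. Then the function h(ρ) = T · r(u(ρ)) + c · ρ has a monotone nondecreasing derivative on (0, 1); in particular h is convex on (0, 1), so it has at most one interior local minimum (it is unimodal). -/
/-! The derivative of `u(ρ) = 2 - ρ - ρ (log ρ - 1) ^ 2` is `-(log ρ) ^ 2`, which increases on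
`(0, 1]` because `log` increases to `0` there; hence `u` is convex. The function `r` is convex and
nondecreasing, so its composition with `u` is convex, and adding a linear term preserves
convexity. Finally, a differentiable convex function has a monotone derivative. -/

open Set

section ConvexComposition

variable {𝕜 E α β : Type*} [Semiring 𝕜] [PartialOrder 𝕜] [AddCommMonoid E] [AddCommMonoid α]
  [PartialOrder α] [AddCommMonoid β] [PartialOrder β] [SMul 𝕜 E] [SMul 𝕜 α] [SMul 𝕜 β]

/-- Unlike in `ConvexOn.comp`, the image `f '' s` need not be convex. -/
theorem convexOn_comp_of_mapsTo {s : Set E} {t : Set β} {f : E → β} {g : β → α}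
    (hg : ConvexOn 𝕜 t g) (hg_mono : MonotoneOn g t) (hf : ConvexOn 𝕜 s f) (hst : MapsTo f s t) :
    ConvexOn 𝕜 s (g ∘ f) := by
  refine ⟨hf.1, fun x hx y hy a b ha hb hab ↦ ?_⟩
  calc
    g (f (a • x + b • y)) ≤ g (a • f x + b • f y) :=
      hg_mono (hst (hf.1 hx hy ha hb hab)) (hg.1 (hst hx) (hst hy) ha hb hab)
        (hf.2 hx hy ha hb hab)
    _ ≤ a • g (f x) + b • g (f y) := hg.2 (hst hx) (hst hy) ha hb hab

end ConvexComposition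

theorem antitoneOn_log_sq : AntitoneOn (fun x ↦ Real.log x ^ 2) (Ioc 0 1) := by
  intro x hx y hy hxy
  have h_log : Real.log x ≤ Real.log y := Real.log_le_log hx.1 hxy
  have h_nonpos : Real.log y ≤ 0 := Real.log_nonpos hy.1.le hy.2
  exact sq_le_sq.mpr (abs_le_abs_of_nonpos h_nonpos h_log)

/-- The pruning-error level `u(ρ)` at `ρ`, as a function on all of `ℝ`; only its values on `(0, 1]`
are meaningful, since `Real.log` takes junk values at nonpositive arguments. -/
noncomputable def pruningError (ρ : ℝ) : ℝ :=
  2 - ρ - ρ * (Real.log ρ - 1) ^ 2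

theorem hasDerivAt_pruningError {ρ : ℝ} (hρ : ρ ≠ 0) :
    HasDerivAt pruningError (-Real.log ρ ^ 2) ρ := by
  have h_sq : HasDerivAt (fun x ↦ (Real.log x - 1) ^ 2) (2 * (Real.log ρ - 1) * ρ⁻¹) ρ := by
    simpa using ((Real.hasDerivAt_log hρ).sub_const 1).fun_pow 2
  refine (((hasDerivAt_id' ρ).const_sub 2).sub ((hasDerivAt_id' ρ).mul h_sq)).congr_deriv ?_
  field_simp
  ring

theorem continuousOn_pruningError : ContinuousOn pruningError (Ioc 0 1) :=
  fun _ hρ ↦ (hasDerivAt_pruningError hρ.1.ne').continuousAt.continuousWithinAt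

theorem convexOn_pruningError : ConvexOn ℝ (Ioc 0 1) pruningError := by
  have h_deriv : ∀ ρ ∈ interior (Ioc (0 : ℝ) 1), HasDerivAt pruningError (-Real.log ρ ^ 2) ρ :=
    fun ρ hρ ↦ hasDerivAt_pruningError (interior_subset hρ).1.ne'
  refine MonotoneOn.convexOn_of_deriv (convex_Ioc 0 1) continuousOn_pruningError
    (fun ρ hρ ↦ (h_deriv ρ hρ).differentiableAt.differentiableWithinAt) ?_
  exact (antitoneOn_log_sq.neg.mono interior_subset).congr fun ρ hρ ↦ (h_deriv ρ hρ).deriv.symm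

theorem strictAntiOn_pruningError : StrictAntiOn pruningError (Ioc 0 1) := by
  refine strictAntiOn_of_deriv_neg (convex_Ioc 0 1) continuousOn_pruningError fun ρ hρ ↦ ?_
  rw [interior_Ioc] at hρ
  rw [(hasDerivAt_pruningError hρ.1.ne').deriv]
  exact neg_neg_of_pos (sq_pos_of_neg (Real.log_neg hρ.1 hρ.2))

theorem mapsTo_pruningError_Ioo : MapsTo pruningError (Ioo 0 1) (Ioo 0 2) := by
  intro ρ hρ
  have h_one : pruningError 1 = 0 := by norm_num [pruningError]
  have h_pos : pruningError 1 < pruningError ρ :=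
    strictAntiOn_pruningError (Ioo_subset_Ioc_self hρ) (right_mem_Ioc.mpr one_pos) hρ.2
  have h_gap : 0 ≤ ρ * (Real.log ρ - 1) ^ 2 := mul_nonneg hρ.1.le (sq_nonneg _)
  refine ⟨h_one ▸ h_pos, ?_⟩
  rw [pruningError]
  linarith [hρ.1]

/-- The objective `h` of the pruning-ratio subproblem: sensing energy `T · r(u(ρ))`, for a sensing
time `T` and a required sensing power `r`, plus a cost linear in `ρ`. -/
noncomputable def sensingObjective (r : ℝ → ℝ) (T c ρ : ℝ) : ℝ :=
  T * r (pruningError ρ) + c * ρ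

theorem differentiableAt_sensingObjective {r : ℝ → ℝ} (T c : ℝ) {ρ : ℝ} (hρ : ρ ≠ 0)
    (hr : DifferentiableAt ℝ r (pruningError ρ)) :
    DifferentiableAt ℝ (sensingObjective r T c) ρ :=
  ((hr.comp ρ (hasDerivAt_pruningError hρ).differentiableAt).const_mul T).add
    (differentiableAt_id.const_mul c)

theorem convexOn_sensingObjective {r : ℝ → ℝ} (hr : ConvexOn ℝ (Ioo 0 2) r)
    (hr_mono : MonotoneOn r (Ioo 0 2)) {T : ℝ} (hT : 0 ≤ T) (c : ℝ) :
    ConvexOn ℝ (Ioo 0 1) (sensingObjective r T c) := by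
  have h_error : ConvexOn ℝ (Ioo 0 1) pruningError :=
    convexOn_pruningError.subset Ioo_subset_Ioc_self (convex_Ioo 0 1)
  have h_comp : ConvexOn ℝ (Ioo 0 1) (r ∘ pruningError) :=
    convexOn_comp_of_mapsTo hr hr_mono h_error mapsTo_pruningError_Ioo
  exact (h_comp.smul hT).add ((LinearMap.mulLeft ℝ c).convexOn (convex_Ioo 0 1))

theorem stmt_11_general {r : ℝ → ℝ} (hr : DifferentiableOn ℝ r (Ioo 0 2))
    (hr' : ∀ x ∈ Ioo (0 : ℝ) 2, 0 ≤ deriv r x) (hr'mono : MonotoneOn (deriv r) (Ioo 0 2))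
    {T : ℝ} (hT : 0 ≤ T) (c : ℝ) :
    MonotoneOn (deriv (sensingObjective r T c)) (Ioo 0 1)
      ∧ ConvexOn ℝ (Ioo 0 1) (sensingObjective r T c)
      ∧ ∀ x ∈ Ioo (0 : ℝ) 1,
          IsLocalMinOn (sensingObjective r T c) (Ioo 0 1) x →
            IsMinOn (sensingObjective r T c) (Ioo 0 1) x := by
  have hr_mono : MonotoneOn r (Ioo 0 2) :=
    monotoneOn_of_deriv_nonneg (convex_Ioo 0 2) hr.continuousOn (hr.mono interior_subset)
      fun x hx ↦ hr' x (interior_subset hx)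
  have hr_conv : ConvexOn ℝ (Ioo 0 2) r :=
    (hr'mono.mono interior_subset).convexOn_of_deriv (convex_Ioo 0 2) hr.continuousOn
      (hr.mono interior_subset)
  have h_conv : ConvexOn ℝ (Ioo 0 1) (sensingObjective r T c) :=
    convexOn_sensingObjective hr_conv hr_mono hT c
  have h_diff : ∀ ρ ∈ Ioo (0 : ℝ) 1, DifferentiableAt ℝ (sensingObjective r T c) ρ := fun ρ hρ ↦
    differentiableAt_sensingObjective T c hρ.1.ne'
      (hr.differentiableAt (isOpen_Ioo.mem_nhds (mapsTo_pruningError_Ioo hρ)))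
  exact ⟨h_conv.monotoneOn_deriv h_diff, h_conv,
    fun x hx h_min ↦ IsMinOn.of_isLocalMinOn_of_convexOn hx h_min h_conv⟩

/-- Theorem 1: with `u(ρ) = 2 − ρ − ρ(log ρ − 1)²`, a differentiable `r` whose derivative
is nonnegative and monotone nondecreasing, and constants `T, c ≥ 0`, the objective
`h(ρ) = T · r(u(ρ)) + c · ρ` has a monotone nondecreasing derivative on `(0, 1)`; in
particular it is convex on `(0, 1)`, so every local minimum on `(0, 1)` is a global
minimum there (the function is unimodal). -/
theorem stmt_11 (u : ℝ → ℝ) (hu : ∀ ρ, u ρ = 2 - ρ - ρ * (Real.log ρ - 1) ^ 2)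
    (r : ℝ → ℝ) (hr : Differentiable ℝ r)
    (hr' : ∀ x, 0 ≤ deriv r x) (hr'mono : Monotone (deriv r))
    (T c : ℝ) (hT : 0 ≤ T) (hc : 0 ≤ c)
    (h : ℝ → ℝ) (hh : ∀ ρ, h ρ = T * r (u ρ) + c * ρ) :
    MonotoneOn (deriv h) (Set.Ioo (0 : ℝ) 1)
      ∧ ConvexOn ℝ (Set.Ioo (0 : ℝ) 1) h
      ∧ ∀ x ∈ Set.Ioo (0 : ℝ) 1,
          IsLocalMinOn h (Set.Ioo (0 : ℝ) 1) x → IsMinOn h (Set.Ioo (0 : ℝ) 1) x := by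
  obtain ⟨rfl, rfl⟩ : u = pruningError ∧ h = sensingObjective r T c :=
    ⟨funext hu, funext fun ρ ↦ by rw [hh, hu, sensingObjective, pruningError]⟩
  exact stmt_11_general hr.differentiableOn (fun x _ ↦ hr' x) (hr'mono.monotoneOn _) hT c
end
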